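/- For any weak composition a, there exists a unique standard key tableau T_a ∈ SKT(a) with des(T_a) = a. Moreover, every non-virtual T ∈ SKT(a) satisfies des(T) ≥ a, where b ≥ a means b_1 + ⋯ + b_k ≥ a_1 + ⋯ + a_k for all k. -/

import Mathlib

open List

namespace EG

/-! ## Words, permutations, and reduced words.

A word is a list of positive natural numbers `(ρ_ℓ, …, ρ_1)`, read left to right,
representing the product of simple transpositions `s_{ρ_ℓ} ⋯ s_{ρ_1}`. -/

/-- The permutation of `ℕ` represented by a word. -/
def toPerm (ρ : List ℕ) : Equiv.Perm ℕ :=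
  (ρ.map fun i => Equiv.swap i (i + 1)).prod

/-- `ρ` is a reduced word: its letters are positive, and no shorter word represents
the same permutation. -/
def IsReducedWord (ρ : List ℕ) : Prop :=
  (∀ i ∈ ρ, 1 ≤ i) ∧
    ∀ σ : List ℕ, (∀ i ∈ σ, 1 ≤ i) → toPerm σ = toPerm ρ → ρ.length ≤ σ.length

/-- `ρ` is a reduced word for the permutation `w`. -/
def ReducedWordFor (ρ : List ℕ) (w : Equiv.Perm ℕ) : Prop :=
  IsReducedWord ρ ∧ toPerm ρ = w

/-! ## Elementary Coxeter–Knuth relations. -/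

/-- The elementary Coxeter–Knuth move on a consecutive triple
`(a, b, c) = (ρ_{i+1}, ρ_i, ρ_{i−1})`. -/
def ckTriple (a b c : ℕ) : ℕ × ℕ × ℕ :=
  if a = c then (b, a, b)
  else if (c > a ∧ a > b) ∨ (c < a ∧ a < b) then (a, c, b)
  else if (a > c ∧ c > b) ∨ (a < c ∧ c < b) then (b, a, c)
  else (a, b, c)

/-- The elementary Coxeter–Knuth relation `𝔡_i`, acting on the letters
`ρ_{i+1} ρ_i ρ_{i−1}` of a word `ρ = (ρ_ℓ, …, ρ_1)` (indexed from the right). -/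
def ckMove (i : ℕ) (ρ : List ℕ) : List ℕ :=
  if 2 ≤ i ∧ i + 1 ≤ ρ.length then
    let p := ρ.length - i - 1
    let t := ckTriple (ρ.getD p 0) (ρ.getD (p + 1) 0) (ρ.getD (p + 2) 0)
    ((ρ.set p t.1).set (p + 1) t.2.1).set (p + 2) t.2.2
  else ρ

/-- Two words are Coxeter–Knuth equivalent if one is obtained from the other by a
finite sequence of elementary Coxeter–Knuth relations. -/
def CKEquiv (ρ σ : List ℕ) : Prop :=
  ∃ ms : List ℕ, σ = ms.foldl (fun w i => ckMove i w) ρ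

/-! ## Run decompositions and descent tableaux. -/

/-- Split a list into maximal blocks, breaking between consecutive letters `a`, `b`
whenever `brk a b` holds. -/
def splitWhen (brk : ℕ → ℕ → Bool) : List ℕ → List (List ℕ)
  | [] => []
  | [a] => [[a]]
  | a :: b :: rest =>
    match splitWhen brk (b :: rest) with
    | r :: rs => if brk a b then [a] :: r :: rs else (a :: r) :: rs
    | [] => [[a]]

/-- The run decomposition of a word into maximal strictly increasing runs, listed
left to right (so the list is `[ρ⁽ᵏ⁾, …, ρ⁽¹⁾]`, with `ρ⁽¹⁾` the final run). -/
def runs (ρ : List ℕ) : List (List ℕ) := splitWhen (fun a b => decide (b ≤ a)) ρ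

/-- The rows of the descent tableau `𝔻(ρ)`, listed bottom to top:
`[ρ⁽¹⁾, …, ρ⁽ᵏ⁾]`. -/
def rowsOf (ρ : List ℕ) : List (List ℕ) := (runs ρ).reverse

/-- The row reading word of a tableau whose rows are listed bottom to top:
read rows left to right, starting with the top row. -/
def wordOf (R : List (List ℕ)) : List ℕ := R.reverse.flatten

/-- The descent composition `Des(ρ) = (|ρ⁽¹⁾|, …, |ρ⁽ᵏ⁾|)`. -/
def DesComp (ρ : List ℕ) : List ℕ := (rowsOf ρ).map List.length

/-- A list of rows (bottom to top) is an increasing Young tableau of partition shape: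
rows strictly increase left to right, shape is a partition, and columns strictly
increase bottom to top. -/
def IsIncreasingYoungRows (R : List (List ℕ)) : Prop :=
  (∀ r ∈ R, r.Chain' (· < ·)) ∧
    R.Chain' (fun lo hi => hi.length ≤ lo.length ∧
      ∀ j < hi.length, lo.getD j 0 < hi.getD j 0)

/-! ## The drop map on a pair of increasing rows. -/

/-- Increment the first `n` letters of a list by `1`. -/
def incFirst : ℕ → List ℕ → List ℕ
  | 0, l => l
  | _ + 1, [] => []
  | n + 1, a :: l => (a + 1) :: incFirst n l

/-- Decrement the first `n` letters of a list by `1`. -/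
def decFirst : ℕ → List ℕ → List ℕ
  | 0, l => l
  | _ + 1, [] => []
  | n + 1, a :: l => (a - 1) :: decFirst n l

/-- `bCount t1 i [s_i, s_{i+1}, …]` is the largest `b` with `t1 = s_j + j` for all
`i ≤ j < i + b`. -/
def bCount (t1 : ℕ) : ℕ → List ℕ → ℕ
  | _, [] => 0
  | i, s :: rest => if t1 = s + i then bCount t1 (i + 1) rest + 1 else 0

/-- Index of the first failure `τ_j ≤ σ_j` in the drop alignment of `σ` below `τ`. -/
def failIdx (τ σ : List ℕ) : Option ℕ :=
  (τ.zip σ).findIdx? (fun p => decide (p.1 ≤ p.2))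

/-- Fueled computation of the drop of the row `σ` below the row `τ`, returning the
new pair (top row, bottom row). -/
def dropPairAux : ℕ → List ℕ → List ℕ → List ℕ × List ℕ
  | 0, τ, σ => (τ, σ)
  | fuel + 1, τ, σ =>
    match failIdx τ σ with
    | none =>
      if σ.length < τ.length then (τ.take σ.length, σ ++ τ.drop σ.length)
      else (τ, σ)
    | some j =>
      let x := τ.getD j 0
      let τr := τ.drop (j + 1)
      let σr := σ.drop j
      let res := dropPairAux fuel τr σr
      let l1 := (failIdx τr σr).getD τr.length
      let b := if l1 = 0 then 0
               else if x + 1 = τr.headD 0 then bCount (τr.headD 0) 1 (σr.take l1) else 0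
      (τ.take j ++ res.1, σ.take j ++ x :: incFirst b res.2)

/-- The drop of the row `σ` below the row `τ`: the pair (new top row, new bottom row). -/
def dropPair (τ σ : List ℕ) : List ℕ × List ℕ := dropPairAux (τ.length + 1) τ σ

/-- The word `drop(τσ)`. -/
def dropW (τ σ : List ℕ) : List ℕ := (dropPair τ σ).1 ++ (dropPair τ σ).2

/-- Apply `drop` to rows `i` and `i+1` (1-indexed from the bottom) of a list of rows. -/
def dropAt : ℕ → List (List ℕ) → List (List ℕ)
  | 1, σr :: τr :: rest => (dropPair τr σr).2 :: (dropPair τr σr).1 :: rest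
  | n + 2, r :: R => r :: dropAt (n + 1) R
  | _, R => R

/-- The map `drop_i` on words: replace the runs `ρ⁽ⁱ⁺¹⁾ ρ⁽ⁱ⁾` of the run
decomposition by `drop(ρ⁽ⁱ⁺¹⁾ ρ⁽ⁱ⁾)`. -/
def dropWordAt (i : ℕ) (ρ : List ℕ) : List ℕ := wordOf (dropAt i (rowsOf ρ))

/-- One sweep of all the maps `drop_i`. -/
def sweepDrop (ρ : List ℕ) : List ℕ :=
  (List.range (runs ρ).length).foldl (fun w i => dropWordAt (i + 1) w) ρ

/-- The drop `drop(ρ)` of a word: repeatedly apply the maps `drop_i` until reaching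
the fixed point (an increasing Young tableau). -/
def dropFull (ρ : List ℕ) : List ℕ := sweepDrop^[ρ.length * ρ.length + 1] ρ

/-! ## The lift map on a pair of increasing rows. -/

/-- `bCount2 x i τblk σblk` is the largest `b` with `τ_j = σ_j = x + j` for all
`i ≤ j < i + b`. -/
def bCount2 (x : ℕ) : ℕ → List ℕ → List ℕ → ℕ
  | i, t :: ts, s :: ss =>
      if t = x + i ∧ s = x + i then bCount2 x (i + 1) ts ss + 1 else 0
  | _, _, _ => 0

/-- Index of the first failure (from the right) in the lift alignment of `τ` above
`σ`: here both rows are given reversed. -/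
def liftFailIdx (τR σR : List ℕ) : Option ℕ :=
  (τR.zip σR).findIdx? (fun p => decide (p.1 < p.2))

/-- Fueled computation of the lift of the row `τ` above the row `σ`, on reversed
rows; returns the new (top row, bottom row), reversed. -/
def liftPairAuxR : ℕ → List ℕ → List ℕ → List ℕ × List ℕ
  | 0, τR, σR => (τR, σR)
  | fuel + 1, τR, σR =>
    match liftFailIdx τR σR with
    | none => (τR, σR)
    | some j =>
      let x := σR.getD j 0
      let τr := τR.drop j
      let σr := σR.drop (j + 1)
      let res := liftPairAuxR fuel τr σr
      let τblk := (τR.take j).reverse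
      let σblk := (σR.take j).reverse
      let b := if σblk.headD 0 = x + 1 then bCount2 x 1 τblk σblk else 0
      (τR.take j ++ x :: res.1, (decFirst b σblk).reverse ++ res.2)

/-- Check that the lift alignment leaves no unmatched letters of `σ` (no letter of
`σ` other than the `x_j`'s lacks a letter of `τ` above it); when some letter is
left over, the lift acts trivially. -/
def liftOkAux : ℕ → List ℕ → List ℕ → Bool
  | 0, _, _ => true
  | fuel + 1, τR, σR =>
    match liftFailIdx τR σR with
    | none => σR.length ≤ τR.length
    | some j => liftOkAux fuel (τR.drop j) (σR.drop (j + 1))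

/-- The lift of the row `τ` above the row `σ`: the pair (new top row, new bottom row). -/
def liftPair (τ σ : List ℕ) : List ℕ × List ℕ :=
  if liftOkAux (σ.length + 1) τ.reverse σ.reverse then
    let r := liftPairAuxR (σ.length + 1) τ.reverse σ.reverse
    (r.1.reverse, r.2.reverse)
  else (τ, σ)

/-- The word `lift(τσ)`. -/
def liftW (τ σ : List ℕ) : List ℕ := (liftPair τ σ).1 ++ (liftPair τ σ).2

/-- Apply `lift` to rows `i` and `i+1` (1-indexed from the bottom) of a list of rows. -/
def liftAt : ℕ → List (List ℕ) → List (List ℕ)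
  | 1, σr :: τr :: rest => (liftPair τr σr).2 :: (liftPair τr σr).1 :: rest
  | n + 2, r :: R => r :: liftAt (n + 1) R
  | _, R => R

/-- The lifting sequence `lift_{[i,j]} = lift_j ∘ ⋯ ∘ lift_i`. -/
def liftSeq (i j : ℕ) (T : List (List ℕ)) : List (List ℕ) :=
  (List.range' i (j + 1 - i)).foldl (fun t k => liftAt k t) T

/-- Fueled check that `lift_i, lift_{i+1}, …` all act faithfully, for `n` steps. -/
def faithfulAux : ℕ → ℕ → List (List ℕ) → Bool
  | 0, _, _ => false
  | n + 1, i, T =>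
    let T' := liftAt i T
    if T' = T then false
    else if n = 0 then true
    else faithfulAux n (i + 1) T'

/-- The lifting sequence `lift_{[i,j]}` acts faithfully on `T`. -/
def faithfulSeq (i j : ℕ) (T : List (List ℕ)) : Bool :=
  if i ≤ j then faithfulAux (j + 1 - i) i T else false

/-- Find the canonical move: the maximal `j` admitting some `i ≤ j` with
`lift_{[i,j]}` faithful, together with the minimal such `i`. -/
def findMove (T : List (List ℕ)) : Option (ℕ × ℕ) :=
  (List.range (T.length + 1)).reverse.findSome? (fun j =>
    ((List.range' 1 j).find? (fun i => faithfulSeq i j T)).map (fun i => (i, j)))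

/-- Fueled canonical lifting loop. -/
def liftCanonAux : ℕ → List (List ℕ) → List (List ℕ)
  | 0, T => T
  | fuel + 1, T =>
    match findMove T with
    | none => T
    | some ij => liftCanonAux fuel (liftSeq ij.1 ij.2 T)

/-- The canonical lifting algorithm applied to a tableau (rows bottom to top). -/
def liftCanon (T : List (List ℕ)) : List (List ℕ) :=
  liftCanonAux (T.flatten.length * T.length + 1) T

/-- The word `lift(ρ)`: the row reading word of the canonical lift of `𝔻(ρ)`. -/
def liftWord (ρ : List ℕ) : List ℕ := wordOf (liftCanon (rowsOf ρ))

/-! ## Weak descent compositions. -/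

/-- From the list of minima `[r_k, …, r_1]` of the runs (topmost first), compute
`[r̂_k, …, r̂_1]` where `r̂_k = r_k` and `r̂_i = min (r_i, r̂_{i+1} − 1)`. -/
def hatMins (L : List ℤ) : List ℤ :=
  (L.foldl (fun (acc : List ℤ × Option ℤ) r =>
    let v := match acc.2 with
      | none => r
      | some p => min r (p - 1)
    (acc.1 ++ [v], some v)) ([], none)).1

/-- Build the weak composition with value `lens_i` in position `hs_i` and `0`
elsewhere. -/
def buildWeakComp (hs : List ℤ) (lens : List ℕ) : List ℕ :=
  (List.range (hs.headD 0).toNat).map (fun p =>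
    match (hs.zip lens).find? (fun q => decide (q.1 = (p : ℤ) + 1)) with
    | some q => q.2
    | none => 0)

/-- The weak descent composition determined by the minima and lengths of the runs
(topmost run first); `none` means virtual. -/
def desFromBlocks (mins : List ℤ) (lens : List ℕ) : Option (List ℕ) :=
  let hs := hatMins mins
  if hs = [] then some []
  else if hs.getLastD 0 ≤ 0 then none
  else some (buildWeakComp hs lens)

/-- The weak descent composition `des(ρ)` of a word; `none` means `ρ` is virtual. -/
def desWord (ρ : List ℕ) : Option (List ℕ) :=
  desFromBlocks ((runs ρ).map (fun r => ((r.headD 0 : ℕ) : ℤ)))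
    ((runs ρ).map List.length)

/-- Prefix-sum dominance of weak compositions: `domLe a b` means
`a_1 + ⋯ + a_k ≤ b_1 + ⋯ + b_k` for all `k` (i.e. `b ≥ a`). -/
def domLe (a b : List ℕ) : Prop := ∀ k, ((a.take k).sum ≤ (b.take k).sum)

/-- A reduced word is Yamanouchi if it is non-virtual and its weak descent
composition is dominated by that of every non-virtual Coxeter–Knuth equivalent word. -/
def IsYam (ρ : List ℕ) : Prop :=
  IsReducedWord ρ ∧ ∃ d, desWord ρ = some d ∧
    ∀ σ e, CKEquiv ρ σ → desWord σ = some e → domLe d e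

/-! ## Quasisymmetric functions, slide polynomials, and generating functions.

We model formal power series in variables `x_1, x_2, …` (indexed by `ℕ`, with
variable `i` standing for `x_{i+1}`) as functions `(ℕ →₀ ℕ) → ℤ` recording
coefficients of monomials. -/

/-- `β` refines `α`: `β` splits into consecutive blocks with sums the parts of `α`. -/
def Refines (β α : List ℕ) : Prop :=
  ∃ blocks : List (List ℕ), blocks.flatten = β ∧
    List.Forall₂ (fun blk a => blk.sum = a) blocks α

/-- The flattening of a weak composition given as a finitely supported exponent
vector: the list of its nonzero values, in order. -/
def flatOf (b : ℕ →₀ ℕ) : List ℕ :=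
  ((List.range (b.support.sup id + 1)).map b).filter (fun x => decide (x ≠ 0))

open Classical in
/-- The fundamental quasisymmetric function `F_α`. -/
noncomputable def Fqs (α : List ℕ) : (ℕ →₀ ℕ) → ℤ :=
  fun b => if Refines (flatOf b) α then 1 else 0

open Classical in
/-- The fundamental slide polynomial `𝔉_a` of a weak composition `a`. -/
noncomputable def FSlide (a : List ℕ) : (ℕ →₀ ℕ) → ℤ :=
  fun b =>
    if (∀ i, a.length ≤ i → b i = 0) ∧
       (∀ k, (a.take k).sum ≤ ∑ i ∈ Finset.range k, b i) ∧
       Refines (flatOf b) (a.filter (fun x => decide (x ≠ 0))) then 1 else 0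

/-- `𝔉` extended to virtual indices by `𝔉_∅ = 0`. -/
noncomputable def FSlideO : Option (List ℕ) → (ℕ →₀ ℕ) → ℤ
  | none => 0
  | some a => FSlide a

/-- The Stanley symmetric function `S_w`. -/
noncomputable def StanleySym (w : Equiv.Perm ℕ) : (ℕ →₀ ℕ) → ℤ :=
  ∑ᶠ ρ ∈ {ρ : List ℕ | ReducedWordFor ρ w}, Fqs (DesComp ρ)

/-- The Schubert polynomial `𝔖_w`. -/
noncomputable def Schubert (w : Equiv.Perm ℕ) : (ℕ →₀ ℕ) → ℤ :=
  ∑ᶠ ρ ∈ {ρ : List ℕ | ReducedWordFor ρ w}, FSlideO (desWord ρ)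

/-! ## Standard Young tableaux and Schur functions. -/

/-- The (bottom-to-top) row index of the row of `T` containing the entry `e`. -/
def rowOf (T : List (List ℕ)) (e : ℕ) : ℕ := T.findIdx (fun r => r.contains e)

/-- The column index of the entry `e` in `T`. -/
def colOf (T : List (List ℕ)) (e : ℕ) : ℕ :=
  (T.getD (rowOf T e) []).findIdx (fun z => z == e)

/-- `T` (rows listed bottom to top) is a standard Young tableau. -/
def IsSYT (T : List (List ℕ)) : Prop :=
  (∀ r ∈ T, r.Chain' (· < ·)) ∧
    T.Chain' (fun lo hi => hi.length ≤ lo.length ∧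
      ∀ j < hi.length, lo.getD j 0 < hi.getD j 0) ∧
    [] ∉ T ∧
    T.flatten.Perm (List.range' 1 T.flatten.length)

/-- The descent composition of a standard Young tableau: `i` is a descent when
`i+1` lies weakly left of `i`. -/
def sytDes (T : List (List ℕ)) : List ℕ :=
  (splitWhen (fun a _ => decide (colOf T (a + 1) ≤ colOf T a))
    (List.range' 1 T.flatten.length)).map List.length

/-- The Schur function `s_λ`, for a partition `λ` given as the list of row lengths
bottom to top. -/
noncomputable def Schur (lam : List ℕ) : (ℕ →₀ ℕ) → ℤ :=
  ∑ᶠ T ∈ {T : List (List ℕ) | IsSYT T ∧ T.map List.length = lam}, Fqs (sytDes T)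

/-! ## Standard key tableaux and Demazure characters. -/

/-- `T` is a standard key tableau of shape the weak composition `a`: rows (listed
bottom to top, with row `i` of length `a_i`, possibly `0`) strictly decrease left to
right, the entries are `1, …, |a|`, and whenever an entry `i` lies above an entry
`k` in the same column with `i < k`, some entry `j` right of `k` satisfies `i < j`. -/
def IsSKT (a : List ℕ) (T : List (List ℕ)) : Prop :=
  T.map List.length = a ∧
    (∀ r ∈ T, r.Chain' (· > ·)) ∧
    T.flatten.Perm (List.range' 1 a.sum) ∧
    ∀ lo hi, lo < hi → hi < T.length →
      ∀ c, c < (T.getD hi []).length → c < (T.getD lo []).length →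
        (T.getD hi []).getD c 0 < (T.getD lo []).getD c 0 →
        ∃ c', c < c' ∧ c' < (T.getD lo []).length ∧
          (T.getD hi []).getD c 0 < (T.getD lo []).getD c' 0

/-- The runs of the word `n ⋯ 2 1` determined by the descents of a standard key
tableau `T` (where `i` is a descent when `i+1` lies weakly right of `i`). -/
def sktRuns (T : List (List ℕ)) : List (List ℕ) :=
  splitWhen (fun _ b => decide (colOf T b ≤ colOf T (b + 1)))
    ((List.range' 1 T.flatten.length).reverse)

/-- The minimal row (1-indexed from the bottom) among the cells of the entries of
`r` in `T`. -/
def minRow (T : List (List ℕ)) (r : List ℕ) : ℕ :=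
  ((r.map (fun e => rowOf T e + 1)).min?).getD 0

/-- The weak descent composition `des(T)` of a standard key tableau; `none` means
`T` is virtual. -/
def desSKT (T : List (List ℕ)) : Option (List ℕ) :=
  (desFromBlocks ((sktRuns T).map (fun r => ((minRow T r : ℕ) : ℤ)))
    ((sktRuns T).map List.length)).map
      (fun d => d ++ List.replicate (T.length - d.length) 0)

/-- The Demazure character (key polynomial) `κ_a`. -/
noncomputable def KeyPoly (a : List ℕ) : (ℕ →₀ ℕ) → ℤ :=
  ∑ᶠ T ∈ {T : List (List ℕ) | IsSKT a T}, FSlideO (desSKT T)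

/-- `κ` extended to virtual indices by `κ_∅ = 0`. -/
noncomputable def KeyPolyO : Option (List ℕ) → (ℕ →₀ ℕ) → ℤ
  | none => 0
  | some a => KeyPoly a

/-! ## Edelman–Greene insertion and weak insertion. -/

/-- Edelman–Greene insertion of `x` into a single row: either append `x`, or bump
the smallest entry exceeding `x` (suppressing the replacement when that entry is
`x+1` and `x` already occurs in the row). -/
def eginsRow (x : ℕ) (row : List ℕ) : List ℕ × Option ℕ :=
  match row.findIdx? (fun z => decide (x < z)) with
  | none => (row ++ [x], none)
  | some j =>
    let y := row.getD j 0
    (if y = x + 1 ∧ row.contains x then row else row.set j x, some y)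

/-- Edelman–Greene insertion of `x` into a tableau (rows bottom to top). -/
def egins : ℕ → List (List ℕ) → List (List ℕ)
  | x, [] => [[x]]
  | x, row :: rest =>
    match eginsRow x row with
    | (r, none) => r :: rest
    | (r, some y) => r :: egins y rest

/-- The Edelman–Greene insertion tableau `P(ρ)` of a word. -/
def PEG (ρ : List ℕ) : List (List ℕ) := ρ.foldl (fun P x => egins x P) []

/-- One sweep of all the maps `drop_i` on a tableau (rows bottom to top). -/
def sweepDropT (T : List (List ℕ)) : List (List ℕ) :=
  (List.range T.length).foldl (fun t i => dropAt (i + 1) t) T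

/-- The drop of a tableau: repeatedly drop until reaching the increasing Young
tableau of the class. -/
def dropCanon (T : List (List ℕ)) : List (List ℕ) :=
  sweepDropT^[T.flatten.length * T.length + 1] T

/-- Weak insertion of the letter `x` into a Yamanouchi key tableau `P`:
`lift (drop P ← x)`. -/
def winsert (x : ℕ) (P : List (List ℕ)) : List (List ℕ) :=
  liftCanon (egins x (dropCanon P))

/-- The weak insertion tableau `P̃(ρ)` (rows bottom to top). -/
def Pweak (ρ : List ℕ) : List (List ℕ) := ρ.foldl (fun P x => winsert x P) []

/-- The Yamanouchi word of the Coxeter–Knuth class of `ρ`: the row reading word of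
`P̃(ρ)`. -/
def yamWord (ρ : List ℕ) : List ℕ := wordOf (Pweak ρ)

/-- The shape (weak composition) of the weak insertion tableau of the first `m`
letters of `ρ`. -/
def shapeAt (ρ : List ℕ) (m : ℕ) : List ℕ :=
  (desWord (wordOf (Pweak (ρ.take m)))).getD []

/-- Append the entry `e` at the end of row `j` (0-indexed from the bottom),
extending with empty rows as needed. -/
def placeEntry (Q : List (List ℕ)) (j e : ℕ) : List (List ℕ) :=
  let Q' := Q ++ List.replicate (j + 1 - Q.length) []
  Q'.set j (Q'.getD j [] ++ [e])

/-- The (0-indexed) row in which the shape grows from `aold` to `anew`. -/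
def growRow (aold anew : List ℕ) : ℕ :=
  ((List.range anew.length).find?
    (fun j => decide (aold.getD j 0 ≠ anew.getD j 0))).getD 0

/-- The weak recording tableau `Q̃(ρ)`: entry `i` is placed in the cell where the
shape grows at the step inserting `ρ_i` (entries are placed in decreasing order). -/
def Qweak (ρ : List ℕ) : List (List ℕ) :=
  (List.range ρ.length).foldl (fun Q m =>
    placeEntry Q (growRow (shapeAt ρ m) (shapeAt ρ (m + 1))) (ρ.length - m)) []

/-! ## Elementary weak dual equivalence involutions. -/

/-- Column reading order on entries: by column, and bottom to top within a column. -/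
def colKeyLe (T : List (List ℕ)) (x y : ℕ) : Bool :=
  decide (colOf T x < colOf T y ∨ (colOf T x = colOf T y ∧ rowOf T x ≤ rowOf T y))

/-- Sort three values by a boolean order. -/
def sort3 (le : ℕ → ℕ → Bool) (a b c : ℕ) : ℕ × ℕ × ℕ :=
  if le a b then
    if le b c then (a, b, c) else if le a c then (a, c, b) else (c, a, b)
  else
    if le a c then (b, a, c) else if le b c then (b, c, a) else (c, b, a)

/-- Relabel the entries `x, y, z` of `T` as `x', y', z'` respectively. -/
def relabel3 (T : List (List ℕ)) (x y z x' y' z' : ℕ) : List (List ℕ) :=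
  T.map (List.map (fun t =>
    if t = x then x' else if t = y then y' else if t = z then z' else t))

/-- The elementary weak dual equivalence involution `d̃_i` on standard key tableaux:
with `u, v, w` the cells of `i−1, i, i+1` in column reading order, if `u` and `w`
share a row and `v` does not, cycle the three entries so that `i` shares a row with
`i ± 1`; else if `v` holds `i+1` swap `i−1, i`; else if `v` holds `i−1` swap
`i, i+1`; otherwise fix `T`. -/
def wde (i : ℕ) (T : List (List ℕ)) : List (List ℕ) :=
  let s := sort3 (colKeyLe T) (i - 1) i (i + 1)
  let u := s.1
  let v := s.2.1
  let w := s.2.2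
  if rowOf T u = rowOf T w ∧ rowOf T v ≠ rowOf T u then
    let T1 := relabel3 T u v w w u v
    let T2 := relabel3 T u v w v w u
    if rowOf T1 i = rowOf T1 (i - 1) ∨ rowOf T1 i = rowOf T1 (i + 1) then T1 else T2
  else if v = i + 1 then relabel3 T (i - 1) i (i + 1) i (i - 1) (i + 1)
  else if v = i - 1 then relabel3 T (i - 1) i (i + 1) (i - 1) (i + 1) i
  else T

/-- Remove trailing zero parts of a weak composition (two weak compositions are
identified when they differ only in trailing zeros). -/
def trimZeros (a : List ℕ) : List ℕ :=
  (a.reverse.dropWhile (fun x => x == 0)).reverse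

/-- The transposition `s_i` acting on compositions by interchanging the parts in
positions `i` and `i+1` (1-indexed). -/
def swapParts (i : ℕ) (c : List ℕ) : List ℕ :=
  if 1 ≤ i ∧ i < c.length then
    (c.set (i - 1) (c.getD i 0)).set i (c.getD (i - 1) 0)
  else c

end EG

namespace EG

/-! ### Recursive form of `hatMins` -/

def hatR : Option ℤ → List ℤ → List ℤ
  | _, [] => []
  | none, r :: L => r :: hatR (some r) L
  | some p, r :: L => min r (p - 1) :: hatR (some (min r (p - 1))) L

theorem hatMins_eq (L : List ℤ) : hatMins L = hatR none L := by
  have key : ∀ (L : List ℤ) (acc : List ℤ) (o : Option ℤ),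
      (L.foldl (fun (acc : List ℤ × Option ℤ) r =>
        let v := match acc.2 with
          | none => r
          | some p => min r (p - 1)
        (acc.1 ++ [v], some v)) (acc, o)).1 = acc ++ hatR o L := by
    intro L
    induction L with
    | nil => intro acc o; cases o <;> simp [hatR]
    | cons r L ih => intro acc o; cases o <;> simp [hatR, ih]
  unfold hatMins
  rw [key]; simp

theorem hatR_forall2 (L : List ℤ) : ∀ o, List.Forall₂ (fun h m => h ≤ m) (hatR o L) L := by
  induction L with
  | nil => intro o; cases o <;> simp [hatR]
  | cons r L ih => intro o; cases o <;> simp [hatR, ih]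

theorem hatR_lt (L : List ℤ) : ∀ p, ∀ h ∈ hatR (some p) L, h < p := by
  induction L with
  | nil => simp [hatR]
  | cons r L ih =>
    intro p h hh
    simp only [hatR, List.mem_cons] at hh
    rcases hh with rfl | hh
    · omega
    · have := ih _ h hh; omega

theorem hatR_pairwise (L : List ℤ) : ∀ o, (hatR o L).Pairwise (· > ·) := by
  induction L with
  | nil => intro o; cases o <;> simp [hatR]
  | cons r L ih =>
    intro o
    cases o <;> simp only [hatR, List.pairwise_cons] <;> exact ⟨fun h hh => hatR_lt _ _ h hh, ih _⟩

theorem hatR_eq_self (L : List ℤ) (hL : L.Pairwise (· > ·)) :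
    ∀ o : Option ℤ, (∀ p, o = some p → ∀ x ∈ L, x < p) → hatR o L = L := by
  induction L with
  | nil => intro o _; cases o <;> simp [hatR]
  | cons r L ih =>
    intro o ho
    rw [List.pairwise_cons] at hL
    cases o with
    | none =>
      simp only [hatR]
      rw [ih hL.2]
      rintro p hp x hx
      cases hp
      exact hL.1 x hx
    | some p =>
      have h1 := ho p rfl r (by simp)
      have h2 : min r (p - 1) = r := by omega
      simp only [hatR, h2]
      rw [ih hL.2]
      rintro p hp x hx
      cases hp
      exact hL.1 x hx

/-! ### The weak composition -/

theorem zip_pairwise {β : Type} (L : List ℤ) (hL : L.Pairwise (· > ·)) :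
    ∀ R : List β, (L.zip R).Pairwise (fun x y => x.1 > y.1) := by
  induction L with
  | nil => simp
  | cons h L ih =>
    intro R
    cases R with
    | nil => simp
    | cons r R =>
      rw [List.pairwise_cons] at hL
      rw [List.zip_cons_cons, List.pairwise_cons]
      exact ⟨fun z hz => hL.1 _ (List.of_mem_zip (a := z.1) (b := z.2) hz).1, ih hL.2 R⟩

theorem find_sum (Z : List (ℤ × ℕ)) (hZ : Z.Pairwise (fun x y => x.1 > y.1)) (q : ℤ) :
    (match Z.find? (fun z => decide (z.1 = q)) with
      | some z => z.2
      | none => 0) = (Z.map (fun z => if z.1 = q then z.2 else 0)).sum := by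
  induction Z with
  | nil => simp
  | cons z Z ih =>
    rw [List.pairwise_cons] at hZ
    by_cases h : z.1 = q
    · have h0 : (Z.map (fun z => if z.1 = q then z.2 else 0)).sum = 0 := by
        apply List.sum_eq_zero
        intro x hx
        rw [List.mem_map] at hx
        obtain ⟨w, hw, rfl⟩ := hx
        have := hZ.1 w hw
        rw [if_neg]; omega
      simp [h, h0]
    · simp only [List.map_cons, List.sum_cons, if_neg h, zero_add]
      rw [← ih hZ.2]
      simp [List.find?_cons, h]

theorem range_sum_swap (Z : List (ℤ × ℕ)) (hZ : ∀ z ∈ Z, 1 ≤ z.1) (N : ℕ) :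
    ((List.range N).map (fun p : ℕ =>
      (Z.map (fun z => if z.1 = (p : ℤ) + 1 then z.2 else 0)).sum)).sum
      = (Z.map (fun z => if z.1 ≤ (N : ℤ) then z.2 else 0)).sum := by
  induction N with
  | zero =>
    simp only [List.range_zero, List.map_nil, List.sum_nil]
    symm
    apply List.sum_eq_zero
    intro x hx
    rw [List.mem_map] at hx
    obtain ⟨w, hw, rfl⟩ := hx
    have := hZ w hw
    rw [if_neg]; push_cast; omega
  | succ N ih =>
    rw [List.range_succ, List.map_append, List.sum_append, ih]
    simp only [List.map_cons, List.map_nil, List.sum_cons, List.sum_nil, add_zero]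
    rw [← List.sum_map_add]
    congr 1
    apply List.map_congr_left
    intro z _
    push_cast
    split_ifs <;> first | omega | rfl

theorem des_formula (mins : List ℤ) (lens : List ℕ) (d : List ℕ)
    (hd : desFromBlocks mins lens = some d) (m k : ℕ) :
    ((d ++ List.replicate m 0).take k).sum =
      (((hatR none mins).zip lens).map (fun z => if z.1 ≤ (k : ℤ) then z.2 else 0)).sum := by
  unfold desFromBlocks at hd
  rw [hatMins_eq] at hd
  have hpw := hatR_pairwise mins none
  generalize hatR none mins = hs at *
  cases hs with
  | nil =>
    simp at hd
    subst hd
    simp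
  | cons h hs =>
    simp only [reduceCtorEq, if_false] at hd
    split_ifs at hd with hlast
    simp only [Option.some.injEq] at hd
    have hpos : ∀ x ∈ h :: hs, 1 ≤ x := by
      intro x hx
      rw [List.getLastD_eq_getLast?, List.getLast?_eq_getLast_of_ne_nil (by simp)] at hlast
      simp only [Option.getD_some] at hlast
      have : (h :: hs).getLast (by simp) ≤ x := by
        have := (hpw.imp (S := fun a b : ℤ => a ≥ b) (fun h => le_of_lt h))
        exact List.Pairwise.rel_getLast this hx
      omega
    have htop : ∀ x ∈ h :: hs, x ≤ h := by
      intro x hx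
      rw [List.pairwise_cons] at hpw
      rcases List.mem_cons.1 hx with rfl | hx
      · exact le_rfl
      · exact le_of_lt (hpw.1 x hx)
    have hz : ((h :: hs).zip lens).Pairwise (fun x y => x.1 > y.1) := by
      exact zip_pairwise _ hpw _
    have hzpos : ∀ z ∈ (h :: hs).zip lens, 1 ≤ z.1 := fun z hz =>
      hpos _ (List.of_mem_zip (a := z.1) (b := z.2) hz).1
    have hztop : ∀ z ∈ (h :: hs).zip lens, z.1 ≤ h := fun z hz =>
      htop _ (List.of_mem_zip (a := z.1) (b := z.2) hz).1
    have hh := hpos h (by simp)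
    have e1 : ((d ++ List.replicate m 0).take k).sum = (d.take k).sum := by
      rw [List.take_append, List.sum_append]
      simp [List.take_replicate]
    rw [e1, ← hd]
    unfold buildWeakComp
    simp only [List.headD_cons, List.bind_eq_flatMap, List.pure_def, ← List.map_eq_flatMap,
      List.map_map, Function.comp_def]
    rw [← List.map_take, List.take_range]
    have e2 := range_sum_swap _ hzpos (min k h.toNat)
    simp only [← find_sum _ hz] at e2
    rw [e2]
    congr 1
    apply List.map_congr_left
    intro z hz
    have := hztop z hz
    congr 1
    apply propext
    push_cast
    omega

/-! ### `splitWhen` -/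

theorem splitWhen_flatten (brk : ℕ → ℕ → Bool) (l : List ℕ) : (splitWhen brk l).flatten = l := by
  induction l with
  | nil => simp [splitWhen]
  | cons a l ih =>
    cases l with
    | nil => simp [splitWhen]
    | cons b l =>
      simp only [splitWhen]
      cases h : splitWhen brk (b :: l) with
      | nil => rw [h] at ih; simp at ih
      | cons r rs =>
        rw [h] at ih
        simp only [List.flatten_cons] at ih
        split_ifs <;> simp [ih]

theorem splitWhen_ne (brk : ℕ → ℕ → Bool) (l : List ℕ) : ∀ r ∈ splitWhen brk l, r ≠ [] := by
  induction l with
  | nil => simp [splitWhen]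
  | cons a l ih =>
    cases l with
    | nil => simp [splitWhen]
    | cons b l =>
      simp only [splitWhen]
      cases h : splitWhen brk (b :: l) with
      | nil => simp
      | cons r rs =>
        rw [h] at ih
        simp only [List.mem_cons, forall_eq_or_imp] at ih
        simp only
        split_ifs
        · simp only [List.mem_cons, forall_eq_or_imp]
          exact ⟨by simp, ih⟩
        · simp only [List.mem_cons, forall_eq_or_imp]
          exact ⟨by simp, ih.2⟩

theorem splitWhen_level (brk : ℕ → ℕ → Bool) (f : ℕ → ℕ) (l : List ℕ)
    (hl : l.IsChain (fun x y => if brk x y = true then f y < f x else f y = f x)) :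
    (∀ r ∈ splitWhen brk l, ∀ x ∈ r, ∀ y ∈ r, f x = f y) ∧
    (splitWhen brk l).Pairwise (fun r r' => ∀ x ∈ r, ∀ y ∈ r', f y < f x) := by
  induction l with
  | nil => simp [splitWhen]
  | cons a l ih =>
    cases l with
    | nil => simp [splitWhen]
    | cons b l =>
      rw [List.isChain_cons_cons] at hl
      obtain ⟨ih1, ih2⟩ := ih hl.2
      have hfl := splitWhen_flatten brk (b :: l)
      have hne := splitWhen_ne brk (b :: l)
      simp only [splitWhen]
      cases h : splitWhen brk (b :: l) with
      | nil => simp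
      | cons r rs =>
        rw [h] at ih1 ih2 hfl hne
        have hb : b ∈ r := by
          cases r with
          | nil => simp at hne
          | cons c r => simp at hfl; simp [hfl.1]
        simp only [List.mem_cons, forall_eq_or_imp] at ih1
        rw [List.pairwise_cons] at ih2
        have hab := hl.1
        simp only
        split_ifs with hbrk
        · rw [if_pos hbrk] at hab
          constructor
          · simp only [List.mem_cons, forall_eq_or_imp]
            exact ⟨by simp, ih1⟩
          · rw [List.pairwise_cons, List.pairwise_cons]
            refine ⟨?_, ih2⟩
            simp only [List.mem_cons, List.not_mem_nil, or_false, forall_eq, forall_eq_or_imp]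
            constructor
            · intro y hy
              rw [← ih1.1 b hb y hy]; exact hab
            · intro r' hr' y hy
              exact lt_trans (ih2.1 r' hr' b hb y hy) hab
        · rw [if_neg hbrk] at hab
          have hall : ∀ x ∈ a :: r, f x = f b := by
            intro x hx
            rcases List.mem_cons.1 hx with rfl | hx
            · exact hab.symm
            · exact ih1.1 x hx b hb
          constructor
          · simp only [List.mem_cons (a := _) (b := a :: r), forall_eq_or_imp]
            refine ⟨fun x hx y hy => by rw [hall x hx, hall y hy], ih1.2⟩
          · rw [List.pairwise_cons]
            refine ⟨fun r' hr' x hx y hy => ?_, ih2.2⟩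
            rw [hall x hx]
            exact ih2.1 r' hr' b hb y hy

/-! ### General facts on key tableaux -/

theorem sktRuns_flatten (T : List (List ℕ)) :
    (sktRuns T).flatten = (List.range' 1 T.flatten.length).reverse := splitWhen_flatten _ _

theorem minRow_le (T : List (List ℕ)) (r : List ℕ) (e : ℕ) (he : e ∈ r) :
    minRow T r ≤ rowOf T e + 1 := by
  unfold minRow
  have hm : rowOf T e + 1 ∈ r.map (fun e => rowOf T e + 1) := List.mem_map.2 ⟨e, he, rfl⟩
  cases h : (r.map (fun e => rowOf T e + 1)).min? with
  | none => simp
  | some v =>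
    simp only [Option.getD_some]
    exact (List.min?_eq_some_iff.1 h).2 _ hm

theorem minRow_mem (T : List (List ℕ)) (r : List ℕ) (hr : r ≠ []) :
    ∃ e ∈ r, minRow T r = rowOf T e + 1 := by
  unfold minRow
  cases h : (r.map (fun e => rowOf T e + 1)).min? with
  | none => simp at h; exact absurd h hr
  | some v =>
    simp only [Option.getD_some]
    have := (List.min?_eq_some_iff.1 h).1
    rw [List.mem_map] at this
    obtain ⟨e, he, h⟩ := this
    exact ⟨e, he, h.symm⟩

theorem rowOf_lt_of_take (T : List (List ℕ)) (k e : ℕ) (he : e ∈ (T.take k).flatten) :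
    rowOf T e < k := by
  rw [List.mem_flatten] at he
  obtain ⟨r, hr, her⟩ := he
  rw [List.mem_take_iff_getElem] at hr
  obtain ⟨i, hi, rfl⟩ := hr
  unfold rowOf
  have : T.findIdx (fun r => r.contains e) ≤ i := by
    by_contra hc
    push Not at hc
    have := List.not_of_lt_findIdx hc
    simp at this
    exact this her
  omega

/-- total length of the runs with hat value at most `k` -/
def lowSum (T : List (List ℕ)) (k : ℕ) : ℕ :=
  (((hatR none ((sktRuns T).map (fun r => ((minRow T r : ℕ) : ℤ)))).zip (sktRuns T)).map
    (fun z => if z.1 ≤ (k : ℤ) then z.2.length else 0)).sum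

theorem desSKT_formula (T : List (List ℕ)) (d : List ℕ) (hd : desSKT T = some d) (k : ℕ) :
    (d.take k).sum = lowSum T k := by
  unfold desSKT at hd
  rw [Option.map_eq_some_iff] at hd
  obtain ⟨d', h1, rfl⟩ := hd
  rw [des_formula _ _ _ h1]
  unfold lowSum
  rw [List.zip_map_right, List.map_map]
  rfl

theorem zip_flatten {α β : Type} (hs : List α) (R : List (List β)) (h : hs.length = R.length) :
    ((hs.zip R).map Prod.snd) = R := by
  exact List.map_snd_zip (by omega)

theorem hat_zip_le (T : List (List ℕ)) (R : List (List ℕ)) (o : Option ℤ) :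
    ∀ z ∈ (hatR o (R.map (fun r => ((minRow T r : ℕ) : ℤ)))).zip R, z.1 ≤ minRow T z.2 := by
  have h := hatR_forall2 (R.map (fun r => ((minRow T r : ℕ) : ℤ))) o
  rw [List.forall₂_map_right_iff] at h
  intro z hz
  exact (List.forall₂_iff_zip.1 h).2 hz

theorem hat_zip_pairwise {β : Type} (L : List ℤ) (R : List β) (o : Option ℤ) :
    ((hatR o L).zip R).Pairwise (fun x y => x.1 > y.1) := by
  exact zip_pairwise _ (hatR_pairwise L o) _

/-- in a strictly decreasing labelled list, the low part is a suffix -/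
theorem low_suffix (Z : List (ℤ × List ℕ)) (hZ : Z.Pairwise (fun x y => x.1 > y.1)) (k : ℤ) :
    ∃ P S : List ℕ, (Z.map Prod.snd).flatten = P ++ S ∧
      S.length = (Z.map (fun z => if z.1 ≤ k then z.2.length else 0)).sum ∧
      ∀ z ∈ Z, z.1 ≤ k → ∀ e ∈ z.2, e ∈ S := by
  induction Z with
  | nil => exact ⟨[], [], by simp⟩
  | cons z Z ih =>
    rw [List.pairwise_cons] at hZ
    obtain ⟨P, S, h1, h2, h3⟩ := ih hZ.2
    by_cases hz : z.1 ≤ k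
    · refine ⟨[], z.2 ++ (Z.map Prod.snd).flatten, by simp, ?_, ?_⟩
      · simp only [List.map_cons, List.sum_cons, if_pos hz, List.length_append,
          List.length_flatten, List.map_map]
        congr 2
        apply List.map_congr_left
        intro w hw
        have := hZ.1 w hw
        rw [if_pos (by omega)]; rfl
      · intro w hw _ e he
        rcases List.mem_cons.1 hw with rfl | hw
        · simp [he]
        · rw [List.mem_append]; right
          rw [List.mem_flatten]
          exact ⟨w.2, List.mem_map.2 ⟨w, hw, rfl⟩, he⟩
    · refine ⟨z.2 ++ P, S, by simp [h1], by simp [hz, h2], ?_⟩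
      intro w hw hwk
      rcases List.mem_cons.1 hw with rfl | hw
      · exact absurd hwk hz
      · exact h3 w hw hwk

theorem flat_low (a : List ℕ) (T : List (List ℕ)) (hT : IsSKT a T) (k e : ℕ)
    (he : e ∈ (T.take k).flatten) : e ≤ lowSum T k := by
  have hlen : T.flatten.length = a.sum := by rw [List.length_flatten, hT.1]
  obtain ⟨P, S, h1, h2, h3⟩ := low_suffix _ (hat_zip_pairwise
    ((sktRuns T).map (fun r => ((minRow T r : ℕ) : ℤ))) (sktRuns T) none) (k : ℤ)
  have hl2 : (hatR none ((sktRuns T).map (fun r => ((minRow T r : ℕ) : ℤ)))).length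
      = (sktRuns T).length := by
    have := (hatR_forall2 ((sktRuns T).map (fun r => ((minRow T r : ℕ) : ℤ))) none).length_eq
    rw [this, List.length_map]
  have hmem : e ∈ T.flatten := by
    rw [← List.take_append_drop k T, List.flatten_append]
    exact List.mem_append_left _ he
  have hmem2 : e ∈ (sktRuns T).flatten := by
    rw [sktRuns_flatten, List.mem_reverse, hlen]
    exact hT.2.2.1.mem_iff.1 hmem
  have hrow := rowOf_lt_of_take T k e he
  rw [zip_flatten _ _ hl2] at h1
  have hS : e ∈ S := by
    rw [List.mem_flatten] at hmem2
    obtain ⟨r, hr, her⟩ := hmem2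
    rw [← zip_flatten _ _ hl2, List.mem_map] at hr
    obtain ⟨z, hz, rfl⟩ := hr
    refine h3 z hz ?_ e her
    have e1 := hat_zip_le T _ none z hz
    have e2 := minRow_le T z.2 e her
    omega
  rw [sktRuns_flatten] at h1
  have hsuf : S = ((List.range' 1 T.flatten.length).take S.length).reverse := by
    have : S.reverse = (List.range' 1 T.flatten.length).take S.length := by
      have := congrArg List.reverse h1
      rw [List.reverse_reverse, List.reverse_append] at this
      rw [this, List.take_left' (by simp)]
    rw [← this, List.reverse_reverse]
  unfold lowSum
  rw [← h2]
  rw [hsuf, List.mem_reverse, List.mem_take_iff_getElem] at hS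
  obtain ⟨i, hi, hie⟩ := hS
  rw [List.getElem_range'] at hie
  omega

theorem skt_nodup (a : List ℕ) (T : List (List ℕ)) (hT : IsSKT a T) : T.flatten.Nodup :=
  hT.2.2.1.nodup_iff.2 (List.nodup_range')

theorem take_flat_len (a : List ℕ) (T : List (List ℕ)) (hT : IsSKT a T) (k : ℕ) :
    (T.take k).flatten.length = (a.take k).sum := by
  rw [List.length_flatten, List.map_take, hT.1]

theorem take_flat_sub (a : List ℕ) (T : List (List ℕ)) (hT : IsSKT a T) (k m : ℕ)
    (hm : ∀ e ∈ (T.take k).flatten, e ≤ m) :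
    (T.take k).flatten.Nodup ∧ (T.take k).flatten ⊆ List.range' 1 m := by
  have hsub : (T.take k).flatten.Sublist T.flatten := (List.take_sublist k T).flatten
  refine ⟨(skt_nodup a T hT).sublist hsub, fun e he => ?_⟩
  have := hT.2.2.1.mem_iff.1 (hsub.subset he)
  rw [List.mem_range'_1] at this ⊢
  have := hm e he
  omega

theorem skt_dom (a : List ℕ) (T : List (List ℕ)) (hT : IsSKT a T) (k : ℕ) :
    (a.take k).sum ≤ lowSum T k := by
  obtain ⟨h1, h2⟩ := take_flat_sub a T hT k _ (fun e he => flat_low a T hT k e he)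
  have := (h1.subperm h2).length_le
  rw [take_flat_len a T hT, List.length_range'] at this
  exact this

/-! ### The canonical tableau -/

def canon : ℕ → List ℕ → List (List ℕ)
  | _, [] => []
  | s, x :: a => (List.range' (s + 1) x).reverse :: canon (s + x) a

theorem canon_lengths (a : List ℕ) : ∀ s, (canon s a).map List.length = a := by
  induction a with
  | nil => simp [canon]
  | cons x a ih => intro s; simp [canon, ih]

theorem canon_perm (a : List ℕ) : ∀ s, (canon s a).flatten.Perm (List.range' (s + 1) a.sum) := by
  induction a with
  | nil => simp [canon]
  | cons x a ih =>
    intro s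
    simp only [canon, List.flatten_cons, List.sum_cons]
    have : List.range' (s + 1) (x + a.sum) =
        List.range' (s + 1) x ++ List.range' (s + x + 1) a.sum := by
      rw [← List.range'_append_1]; congr 2; omega
    rw [this]
    exact (List.reverse_perm _).append (ih _)

theorem canon_mem (a : List ℕ) (s e : ℕ) (r : List ℕ) (hr : r ∈ canon s a) (he : e ∈ r) :
    s < e ∧ e ≤ s + a.sum := by
  have := (canon_perm a s).mem_iff.1 (List.mem_flatten.2 ⟨r, hr, he⟩)
  rw [List.mem_range'_1] at this
  omega

theorem canon_rows (a : List ℕ) : ∀ s, ∀ r ∈ canon s a, r.Pairwise (· > ·) := by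
  induction a with
  | nil => simp [canon]
  | cons x a ih =>
    intro s
    simp only [canon, List.mem_cons, forall_eq_or_imp]
    refine ⟨?_, ih _⟩
    rw [List.pairwise_reverse]
    exact List.pairwise_lt_range'

theorem canon_pairwise (a : List ℕ) : ∀ s,
    (canon s a).Pairwise (fun r r' => ∀ x ∈ r, ∀ y ∈ r', x < y) := by
  induction a with
  | nil => simp [canon]
  | cons x a ih =>
    intro s
    simp only [canon, List.pairwise_cons]
    refine ⟨fun r' hr' u hu y hy => ?_, ih _⟩
    have := canon_mem _ _ _ _ hr' hy
    rw [List.mem_reverse, List.mem_range'_1] at hu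
    omega

theorem canon_skt (a : List ℕ) : IsSKT a (canon 0 a) := by
  refine ⟨canon_lengths a 0, fun r hr => (canon_rows a 0 r hr).isChain, ?_, ?_⟩
  · simpa using canon_perm a 0
  · intro lo hi hlt hhi c hc1 hc2 hval
    exfalso
    have hlo : lo < (canon 0 a).length := by omega
    have := List.pairwise_iff_getElem.1 (canon_pairwise a 0) lo hi hlo hhi hlt
    simp only [List.getD_eq_getElem _ _ hhi, List.getD_eq_getElem _ _ hlo] at hc1 hc2 hval
    rw [List.getD_eq_getElem _ _ hc1, List.getD_eq_getElem _ _ hc2] at hval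
    have := this _ (List.getElem_mem hc2) _ (List.getElem_mem hc1)
    omega

theorem rowOf_cons (r : List ℕ) (T : List (List ℕ)) (e : ℕ) :
    rowOf (r :: T) e = if e ∈ r then 0 else rowOf T e + 1 := by
  unfold rowOf
  rw [List.findIdx_cons]
  by_cases h : e ∈ r <;> simp [h]

theorem colOf_cons (r : List ℕ) (T : List (List ℕ)) (e : ℕ) :
    colOf (r :: T) e = if e ∈ r then r.findIdx (fun z => z == e) else colOf T e := by
  unfold colOf
  rw [rowOf_cons]
  by_cases h : e ∈ r <;> simp [h]

theorem findIdx_range (s x e : ℕ) (h1 : s < e) (h2 : e ≤ s + x) :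
    (List.range' (s + 1) x).reverse.findIdx (fun z => z == e) = s + x - e := by
  have hl : s + x - e < (List.range' (s + 1) x).reverse.length := by simp; omega
  rw [List.findIdx_eq hl]
  constructor
  · simp; omega
  · intro j hj
    simp; omega

theorem canon_step (a : List ℕ) : ∀ s b, s < b → b + 1 ≤ s + a.sum →
    (rowOf (canon s a) b = rowOf (canon s a) (b + 1) ∧
      colOf (canon s a) (b + 1) < colOf (canon s a) b) ∨
    (rowOf (canon s a) b < rowOf (canon s a) (b + 1) ∧
      colOf (canon s a) b ≤ colOf (canon s a) (b + 1)) := by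
  induction a with
  | nil => intro s b h1 h2; simp at h2; omega
  | cons x a ih =>
    intro s b h1 h2
    simp only [List.sum_cons] at h2
    simp only [canon, rowOf_cons, colOf_cons, List.mem_reverse, List.mem_range'_1]
    by_cases c1 : b + 1 ≤ s + x
    · left
      rw [if_pos (by omega), if_pos (by omega), if_pos (by omega), if_pos (by omega),
        findIdx_range _ _ _ (by omega) (by omega), findIdx_range _ _ _ (by omega) (by omega)]
      omega
    · by_cases c2 : b ≤ s + x
      · right
        rw [if_pos (by omega), if_neg (by omega), if_pos (by omega), if_neg (by omega),
          findIdx_range _ _ _ (by omega) (by omega)]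
        omega
      · rw [if_neg (by omega), if_neg (by omega), if_neg (by omega), if_neg (by omega)]
        have := ih (s + x) b (by omega) (by omega)
        omega

theorem canon_level (a : List ℕ) :
    (∀ r ∈ sktRuns (canon 0 a), ∀ x ∈ r, ∀ y ∈ r,
      rowOf (canon 0 a) x = rowOf (canon 0 a) y) ∧
    (sktRuns (canon 0 a)).Pairwise
      (fun r r' => ∀ x ∈ r, ∀ y ∈ r', rowOf (canon 0 a) y < rowOf (canon 0 a) x) := by
  apply splitWhen_level
  have hlen : (canon 0 a).flatten.length = a.sum := by
    rw [List.length_flatten, canon_lengths]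
  rw [hlen, List.isChain_reverse, List.isChain_iff_getElem]
  intro i hi
  simp only [List.length_range'] at hi
  simp only [List.getElem_range', one_mul]
  have := canon_step a 0 (1 + i) (by omega) (by omega)
  rw [show 1 + (i + 1) = 1 + i + 1 by omega]
  simp only [decide_eq_true_eq]
  split_ifs <;> omega

theorem canon_mins (a : List ℕ) :
    ((sktRuns (canon 0 a)).map (fun r => ((minRow (canon 0 a) r : ℕ) : ℤ))).Pairwise (· > ·) := by
  rw [List.pairwise_map]
  have hne : ∀ r ∈ sktRuns (canon 0 a), r ≠ [] := splitWhen_ne _ _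
  refine (canon_level a).2.imp_of_mem ?_
  intro r r' hr hr' h
  obtain ⟨e, he, h1⟩ := minRow_mem (canon 0 a) r (hne r hr)
  obtain ⟨e', he', h1'⟩ := minRow_mem (canon 0 a) r' (hne r' hr')
  have := h e he e' he'
  rw [h1, h1']
  push_cast
  omega

theorem low_bound (Z : List (ℤ × List ℕ)) (k : ℤ) (p : ℕ → Bool)
    (h : ∀ z ∈ Z, z.1 ≤ k → ∀ e ∈ z.2, p e = true) :
    (Z.map (fun z => if z.1 ≤ k then z.2.length else 0)).sum ≤
      (Z.map Prod.snd).flatten.countP p := by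
  induction Z with
  | nil => simp
  | cons z Z ih =>
    have ih := ih (fun w hw => h w (List.mem_cons_of_mem _ hw))
    simp only [List.map_cons, List.sum_cons, List.flatten_cons, List.countP_append]
    split_ifs with hz
    · have := List.countP_eq_length.2 (h z (by simp) hz)
      omega
    · omega

theorem mem_take_of_rowOf (T : List (List ℕ)) (k e : ℕ) (he : e ∈ T.flatten)
    (h : rowOf T e < k) : e ∈ (T.take k).flatten := by
  have hl : rowOf T e < T.length := by
    unfold rowOf
    rw [List.findIdx_lt_length]
    rw [List.mem_flatten] at he
    obtain ⟨r, hr, her⟩ := he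
    exact ⟨r, hr, by simpa using her⟩
  have h2 : (T[rowOf T e]).contains e = true :=
    List.findIdx_getElem (p := fun r : List ℕ => r.contains e) (w := hl)
  rw [List.mem_flatten]
  refine ⟨T[rowOf T e], List.mem_take_iff_getElem.2 ⟨rowOf T e, by omega, rfl⟩, by simpa using h2⟩

theorem canon_low_le (a : List ℕ) (k : ℕ) : lowSum (canon 0 a) k ≤ (a.take k).sum := by
  have hT := canon_skt a
  have hmins := canon_mins a
  have hlev := canon_level a
  generalize canon 0 a = T at *
  have hlen : T.flatten.length = a.sum := by rw [List.length_flatten, hT.1]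
  have hself := hatR_eq_self _ hmins none (by simp)
  unfold lowSum
  rw [hself]
  have hz : ∀ z ∈ ((sktRuns T).map (fun r => ((minRow T r : ℕ) : ℤ))).zip (sktRuns T),
      z.2 ∈ sktRuns T ∧ z.1 = minRow T z.2 := by
    intro z hz
    refine ⟨(List.of_mem_zip (a := z.1) (b := z.2) hz).2, ?_⟩
    have h : List.Forall₂ (fun (h : ℤ) r => h = minRow T r)
        ((sktRuns T).map (fun r => ((minRow T r : ℕ) : ℤ))) (sktRuns T) := by
      rw [List.forall₂_map_left_iff]
      exact List.forall₂_same.2 (fun _ _ => rfl)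
    exact (List.forall₂_iff_zip.1 h).2 hz
  refine (low_bound _ (k : ℤ) (fun e => decide (rowOf T e < k)) ?_).trans ?_
  · intro z hz' hzk e he
    obtain ⟨h1, h2⟩ := hz z hz'
    obtain ⟨e', he', h3⟩ := minRow_mem T z.2 (List.ne_nil_of_mem he)
    have := hlev.1 z.2 h1 e he e' he'
    simp only [decide_eq_true_eq]
    rw [h2, h3] at hzk
    rw [this]
    push_cast at hzk
    omega
  · rw [zip_flatten _ _ (by simp), sktRuns_flatten, hlen]
    rw [(((List.reverse_perm _).trans hT.2.2.1.symm)).countP_eq, ← take_flat_len a T hT,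
      List.countP_eq_length_filter]
    refine (((skt_nodup a T hT).filter _).subperm ?_).length_le
    intro e he
    rw [List.mem_filter] at he
    exact mem_take_of_rowOf T k e he.1 (by simpa using he.2)

theorem canon_low (a : List ℕ) (k : ℕ) : lowSum (canon 0 a) k = (a.take k).sum :=
  le_antisymm (canon_low_le a k) (skt_dom a _ (canon_skt a) k)

theorem eq_of_take_sums (a : List ℕ) : ∀ d : List ℕ, a.length = d.length →
    (∀ k, (a.take k).sum = (d.take k).sum) → a = d := by
  induction a with
  | nil => intro d h _; exact (List.length_eq_zero_iff.1 h.symm).symm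
  | cons x a ih =>
    intro d h hk
    cases d with
    | nil => simp at h
    | cons y d =>
      have h1 := hk 1
      simp at h1
      subst h1
      rw [ih d (by simpa using h)]
      intro k
      have := hk (k + 1)
      simpa using this

theorem canon_des (a : List ℕ) : desSKT (canon 0 a) = some a := by
  have hT := canon_skt a
  have hmins := canon_mins a
  have hlev := canon_level a
  have hcl := canon_low a
  generalize canon 0 a = T at *
  have hlen : T.flatten.length = a.sum := by rw [List.length_flatten, hT.1]
  have hself := hatR_eq_self _ hmins none (by simp)
  have hex : ∃ d, desSKT T = some d ∧ d.length = T.length := by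
    unfold desSKT desFromBlocks
    rw [hatMins_eq, hself]
    by_cases hnil : (sktRuns T).map (fun r => ((minRow T r : ℕ) : ℤ)) = []
    · simp [hnil]
    · simp only [if_neg hnil]
      rw [if_neg]
      · refine ⟨_, rfl, ?_⟩
        rw [List.length_append, List.length_replicate]
        have : (buildWeakComp ((sktRuns T).map (fun r => ((minRow T r : ℕ) : ℤ)))
            ((sktRuns T).map List.length)).length ≤ T.length := by
          unfold buildWeakComp
          simp only [List.bind_eq_flatMap, List.pure_def, ← List.map_eq_flatMap]
          rw [List.length_map, List.length_map, List.length_range]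
          cases hR : sktRuns T with
          | nil => simp [hR] at hnil
          | cons r rs =>
            simp only [List.map_cons, List.headD_cons, Int.toNat_natCast]
            obtain ⟨e, he, h1⟩ := minRow_mem T r
              (splitWhen_ne _ _ r (by
                change r ∈ sktRuns T
                simp [hR]))
            have hm : e ∈ (sktRuns T).flatten := by simp [hR, he]
            rw [sktRuns_flatten, List.mem_reverse, hlen] at hm
            have hm2 := hT.2.2.1.mem_iff.2 hm
            rw [← List.take_length (l := T)] at hm2
            have := rowOf_lt_of_take T T.length e hm2
            omega
        omega
      · rw [not_le, List.getLastD_eq_getLast?, List.getLast?_eq_getLast_of_ne_nil hnil,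
          Option.getD_some]
        have := List.getLast_mem hnil
        rw [List.mem_map] at this
        obtain ⟨r, hr, h⟩ := this
        rw [← h]
        obtain ⟨e, he, h1⟩ := minRow_mem T r (splitWhen_ne _ _ r hr)
        rw [h1]; push_cast; omega
  obtain ⟨d, hd, hdl⟩ := hex
  rw [hd]
  congr 1
  symm
  apply eq_of_take_sums
  · rw [hdl, ← hT.1, List.length_map]
  · intro k
    rw [desSKT_formula T d hd k, hcl]

theorem canon_unique (a : List ℕ) : ∀ (T : List (List ℕ)) (s : ℕ), T.map List.length = a →
    (∀ r ∈ T, r.Pairwise (· > ·)) → (∀ e ∈ T.flatten, s < e) → T.flatten.Nodup →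
    (∀ k, ∀ e ∈ (T.take k).flatten, e ≤ s + (a.take k).sum) → T = canon s a := by
  induction a with
  | nil => intro T s h _ _ _ _; simpa [canon] using h
  | cons x a ih =>
    intro T s hlen hrows hlow hnd hk
    cases T with
    | nil => simp at hlen
    | cons r T =>
      simp only [List.map_cons, List.cons.injEq] at hlen
      simp only [List.mem_cons, forall_eq_or_imp] at hrows
      simp only [List.flatten_cons, List.nodup_append] at hnd
      have hsub : r ⊆ List.range' (s + 1) x := by
        intro e he
        have h1 := hlow e (by simp [he])
        have h2 := hk 1 e (by simp [he])
        simp at h2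
        rw [List.mem_range'_1]; omega
      have hperm : r.Perm (List.range' (s + 1) x) :=
        (hnd.1.subperm hsub).perm_of_length_le (by simp [hlen.1])
      have hr : r = (List.range' (s + 1) x).reverse := by
        refine List.Perm.eq_of_pairwise (le := (· > ·)) ?_ hrows.1 ?_ (hperm.trans (List.reverse_perm _).symm)
        · intro a b _ _ h1 h2; omega
        · rw [List.pairwise_reverse]
          exact List.pairwise_lt_range'
      simp only [canon]
      rw [← hr, ← ih T (s + x) hlen.2 hrows.2 ?_ hnd.2.1 ?_]
      · intro e he
        by_contra hc
        have h1 := hlow e (by simp only [List.flatten_cons, List.mem_append]; exact Or.inr he)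
        have h2 : e ∈ r := hperm.mem_iff.2 (by rw [List.mem_range'_1]; omega)
        exact hnd.2.2 e h2 e he rfl
      · intro k e he
        have := hk (k + 1) e (by
          simp only [List.take_succ_cons, List.flatten_cons, List.mem_append]; exact Or.inr he)
        simp at this
        omega

/-- For any weak composition `a`, there exists a unique standard
key tableau `T_a ∈ SKT(a)` with `des(T_a) = a`; moreover every non-virtual
`T ∈ SKT(a)` satisfies `des(T) ≥ a` (prefix-sum dominance). -/
theorem skt_unique_extreme (a : List ℕ) :
    (∃! T : List (List ℕ), IsSKT a T ∧ desSKT T = some a) ∧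
    ∀ T, IsSKT a T → ∀ d, desSKT T = some d → domLe a d := by
  refine ⟨⟨canon 0 a, ⟨canon_skt a, canon_des a⟩, ?_⟩, ?_⟩
  · rintro T ⟨hT, hd⟩
    refine canon_unique a T 0 hT.1 (fun r hr => ?_) ?_ (skt_nodup a T hT) ?_
    · exact List.isChain_iff_pairwise.1 (hT.2.1 r hr)
    · intro e he
      have := hT.2.2.1.mem_iff.1 he
      rw [List.mem_range'_1] at this
      omega
    · intro k e he
      have := flat_low a T hT k e he
      rw [desSKT_formula T a hd k]
      omega
  · intro T hT d hd k
    rw [desSKT_formula T d hd k]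
    exact skt_dom a T hT k

end EG
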